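/- Let G be a tree with n vertices and let I_c(G) be its complementary edge ideal. Then pd(I_c(G)^s) = s for s ∈ [n−2], and pd(I_c(G)^s) = n−2 for all s ≥ n−2. -/

import Mathlib

/-!
For a tree `G` and `s ≥ 1` the claim is `pd(I_c(G)^s) = min(s, n - 2)`.

Root the tree at `r`, let `p` be the parent function, order the vertices by distance from the root,
and let `u` be the lowest vertex other than `r`.  The edges are `{v, p v}`, `v ≠ r`.  The generators
of `I_c(G)^s` are `m_T = x_{[n]}^s / ∏_{e ∈ T} x_e` for multisets `T` of `s` edges, so `F` is a face
in multidegree `a` exactly when some `T` satisfies `s + [x ∈ F] ≤ a_x + deg_T(x)` for all `x`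
(`face_iff`).  Every edge `{v, p v}` with `v ≠ u` is adjacent to a parent edge `{o v, p v}` closer
to the root, and replacing the former by the latter gives the relation
`x_v m_T = x_{o v} m_{T'}`.

Upper bound.  Compare multisets lexicographically from the highest edge down, encoded by the weight
`wt`, and attach to each face `F` the least weight `tau F` of a multiset supporting it; the least
multiset is unique.  The blocks of constant `tau` filter the complex.  If `T` is the multiset of a
block, deleting a vertex `j` with `j = u` or `T j = 0` stays in the block (`tau_erase`): if it
lowered the optimum, then, at the highest edge where the two optima differ, `T` would have slack and
`exchange` would improve it.  The vertices `v ≠ u` with `T v ≠ 0` number at most `min(s, n - 2)`, so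
a block with a face of more elements contains such a `j` in that face, and toggling `j` contracts
the block (`exists_toggle`).  `acyclic_of_blocks` assembles the contractions into the vanishing of
the homology in degrees above `min(s, n - 2)`.

Lower bound.  For a set `Q` of `min(s, n - 2)` vertices other than `r` and `u`, the product
`∏_{v ∈ Q} (e_v - e_{o v})` in the exterior algebra is a nonzero Koszul cycle (`exists_cycle`) of
faces in a suitable multidegree which, by counting degrees, has no larger faces; so it is not a
boundary (`exists_nontrivial`).
-/

open MvPolynomial

namespace Paper

noncomputable section

variable (K : Type) [Field K] (n : ℕ)

/-- The polynomial ring `S = K[x_1, …, x_n]`. -/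
abbrev S := MvPolynomial (Fin n) K

variable {n}

/-- The squarefree exponent vector of a subset `F ⊆ [n]`. -/
def expF (F : Finset (Fin n)) : Fin n →₀ ℕ := ∑ j ∈ F, Finsupp.single j 1

variable {K}

/-- Basis of the multidegree-`a` component of the `i`-th term of the Koszul
complex of `x_1, …, x_n` tensored with the ideal `I`:  subsets `F` of
cardinality `i` such that `x^(a - ε_F) ∈ I`. -/
abbrev KB (I : Ideal (S K n)) (a : Fin n →₀ ℕ) (i : ℕ) : Type :=
  {F : Finset (Fin n) // F.card = i ∧ expF F ≤ a ∧
    (monomial (a - expF F) (1 : K) : S K n) ∈ I}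

/-- The Koszul differential (in multidegree `a`) from homological degree
`i+1` to `i`. -/
def kd (I : Ideal (S K n)) (a : Fin n →₀ ℕ) (i : ℕ) :
    (KB I a (i + 1) →₀ K) →ₗ[K] (KB I a i →₀ K) :=
  Finsupp.lsum K fun F =>
    LinearMap.toSpanSingleton K _
      (∑ j ∈ F.1.attach,
        ((-1 : K) ^ ((F.1.filter (fun x => x < j.1)).card)) •
          Finsupp.single
            (⟨F.1.erase j.1, by
              obtain ⟨hcard, hle, hmem⟩ := F.2
              have hj : j.1 ∈ F.1 := j.2
              have herase : expF (F.1.erase j.1) + Finsupp.single j.1 1 = expF F.1 := by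
                simpa [expF] using Finset.sum_erase_add F.1 (fun k => Finsupp.single k (1:ℕ)) hj
              refine ⟨by simp [Finset.card_erase_of_mem hj, hcard], ?_, ?_⟩
              · refine le_trans ?_ hle
                rw [← herase]; exact le_add_of_nonneg_right bot_le
              · have h1 : Finsupp.single j.1 1 ≤ expF F.1 := by
                  rw [← herase]; exact le_add_of_nonneg_left bot_le
                have key : a - expF (F.1.erase j.1) =
                    (a - expF F.1) + Finsupp.single j.1 1 := by
                  have : expF (F.1.erase j.1) = expF F.1 - Finsupp.single j.1 1 := by
                    rw [← herase]; simp
                  rw [this, tsub_tsub_assoc hle h1]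
                rw [key]
                have : (monomial ((a - expF F.1) + Finsupp.single j.1 1) (1:K) : S K n)
                    = (monomial (a - expF F.1) (1:K)) * (monomial (Finsupp.single j.1 1) (1:K)) := by
                  rw [monomial_mul, mul_one]
                rw [this]
                exact Ideal.mul_mem_right _ _ hmem⟩ : KB I a i) (1 : K))

/-- The outgoing Koszul differential from homological degree `i`
(the zero map when `i = 0`). -/
def kdOut (I : Ideal (S K n)) (a : Fin n →₀ ℕ) :
    (i : ℕ) → (KB I a i →₀ K) →ₗ[K] (KB I a (i - 1) →₀ K)
  | 0 => 0
  | (i + 1) => kd I a i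

/-- The multidegree-`a` component of `Tor_i^S(K, I)`, computed as the `i`-th
homology of the multidegree-`a` strand of the Koszul complex tensored
with `I`. -/
abbrev Hmod (I : Ideal (S K n)) (a : Fin n →₀ ℕ) (i : ℕ) :=
  ↥(Submodule.map (Submodule.mkQ (LinearMap.range (kd I a i)))
      (LinearMap.ker (kdOut I a i)))

/-- The `i`-th homological shift ideal `HS_i(I)`, generated by the monomials
`x^a` with `Tor_i^S(K, I)_a ≠ 0`. -/
def HSIdeal (i : ℕ) (I : Ideal (S K n)) : Ideal (S K n) :=
  Ideal.span {p | ∃ a : Fin n →₀ ℕ, Nontrivial (Hmod I a i) ∧ p = monomial a 1}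

/-- `I` is a monomial ideal. -/
def IsMonomialIdeal (I : Ideal (S K n)) : Prop :=
  ∃ A : Set (Fin n →₀ ℕ), I = Ideal.span ((fun a => (monomial a 1 : S K n)) '' A)

/-- `I` has a `d`-linear resolution: `Tor_i^S(K,I)_j = 0` whenever `j ≠ i + d`. -/
def LinearRes (d : ℕ) (I : Ideal (S K n)) : Prop :=
  ∀ (i : ℕ) (a : Fin n →₀ ℕ), (a.sum fun _ e => e) ≠ i + d → Subsingleton (Hmod I a i)

/-- The projective dimension of (a finitely generated multigraded module such
as) `I` over `S`: the largest `i` with `Tor_i^S(K, I) ≠ 0`. -/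
def pdim (I : Ideal (S K n)) : ℕ :=
  sSup {i | ∃ a, Nontrivial (Hmod I a i)}

variable (K n)

/-- The graded maximal ideal `𝔪 = (x_1, …, x_n)`. -/
def maxIdl : Ideal (S K n) := Ideal.span (Set.range X)

/-- The `i`-th squarefree power `𝔪^{[i]} = (x_F : F ⊆ [n], |F| = i)`. -/
def sqPow (i : ℕ) : Ideal (S K n) :=
  Ideal.span {p | ∃ F : Finset (Fin n), F.card = i ∧ p = monomial (expF F) 1}

/-- The exponent vector of `α = x_1⋯x_n`. -/
def aexp : Fin n →₀ ℕ := expF (Finset.univ : Finset (Fin n))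

/-- The edge ideal `I(G)` of a graph `G` on `[n]`. -/
def edgeIdeal (G : SimpleGraph (Fin n)) : Ideal (S K n) :=
  Ideal.span {p | ∃ i j, G.Adj i j ∧ p = X i * X j}

/-- The complementary edge ideal `I_c(G)` of a graph `G` on `[n]`. -/
def compIdeal (G : SimpleGraph (Fin n)) : Ideal (S K n) :=
  Ideal.span {p | ∃ i j, G.Adj i j ∧
    p = monomial (aexp n - Finsupp.single i 1 - Finsupp.single j 1) 1}


variable {K} {n}

end

/-! ### The Koszul differential of the full simplex -/

section Koszul

variable {K : Type} [Field K] {n : ℕ}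

/-- The Koszul sign `(-1)^#{x ∈ F : x < j}`. -/
def ksgn (K : Type) [Field K] (j : Fin n) (F : Finset (Fin n)) : K :=
  (-1 : K) ^ ((F.filter (fun x => x < j)).card)

/-- The Koszul differential on chains of the full simplex on `[n]`, a chain being stored as its
coefficient function `Finset (Fin n) → K`. -/
def bd (z : Finset (Fin n) → K) : Finset (Fin n) → K :=
  fun G => ∑ j ∈ Gᶜ, ksgn K j G * z (insert j G)

/-- Left exterior multiplication by the basis vector `e_j`. -/
def wedge (j : Fin n) (z : Finset (Fin n) → K) : Finset (Fin n) → K :=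
  fun F => if j ∈ F then ksgn K j F * z (F.erase j) else 0

lemma ksgn_mul_self (j : Fin n) (F : Finset (Fin n)) : ksgn K j F * ksgn K j F = 1 := by
  simp [ksgn, ← mul_pow]

lemma ksgn_ne_zero (j : Fin n) (F : Finset (Fin n)) : ksgn K j F ≠ 0 := by
  simp [ksgn]

lemma ksgn_insert_self (j : Fin n) (F : Finset (Fin n)) :
    ksgn K j (insert j F) = ksgn K j F := by
  simp [ksgn, Finset.filter_insert]

lemma ksgn_erase_self (j : Fin n) (F : Finset (Fin n)) :
    ksgn K j (F.erase j) = ksgn K j F := by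
  have : (F.erase j).filter (fun x => x < j) = F.filter (fun x => x < j) := by
    ext x
    simp only [Finset.mem_filter, Finset.mem_erase]
    constructor
    · rintro ⟨⟨_, h⟩, h'⟩; exact ⟨h, h'⟩
    · rintro ⟨h, h'⟩; exact ⟨⟨h'.ne, h⟩, h'⟩
  simp [ksgn, this]

lemma ksgn_insert (j k : Fin n) (F : Finset (Fin n)) (hk : k ∉ F) :
    ksgn K j (insert k F) = (if k < j then -1 else 1) * ksgn K j F := by
  unfold ksgn
  rw [Finset.filter_insert]
  split_ifs with h
  · rw [Finset.card_insert_of_notMem (by simp [hk]), pow_succ]; ring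
  · simp

/-- `e_j ∧ e_k = - e_k ∧ e_j` at the level of signs. -/
lemma ksgn_swap (j k : Fin n) (H : Finset (Fin n)) (hj : j ∉ H) (hk : k ∉ H) (hjk : j ≠ k) :
    ksgn K k (insert j H) * ksgn K j (insert k H) = - (ksgn K j H * ksgn K k H) := by
  rw [ksgn_insert k j H hj, ksgn_insert j k H hk]
  rcases lt_or_gt_of_ne hjk with h | h
  · simp [h, h.not_gt]; ring
  · simp [h, h.not_gt]; ring

/-- Exterior multiplication by `e_j` is a contracting homotopy of the full simplex. -/
lemma bd_wedge (j : Fin n) (z : Finset (Fin n) → K) (G : Finset (Fin n)) :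
    bd (wedge j z) G = z G - wedge j (bd z) G := by
  by_cases hj : j ∈ G
  · obtain ⟨H, hH, rfl⟩ : ∃ H, j ∉ H ∧ G = insert j H :=
      ⟨G.erase j, by simp, (Finset.insert_erase hj).symm⟩
    have hc : Hᶜ = insert j (insert j H)ᶜ := by
      ext x; by_cases hx : x = j <;> simp [hx, hH]
    have h1 : wedge j (bd z) (insert j H) = z (insert j H) +
        ∑ k ∈ (insert j H)ᶜ, ksgn K j H * ksgn K k H * z (insert k H) := by
      simp only [wedge, Finset.mem_insert_self, if_true, Finset.erase_insert hH, bd]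
      rw [hc, Finset.sum_insert (by simp), mul_add, ksgn_insert_self, ← mul_assoc, ksgn_mul_self,
        one_mul, Finset.mul_sum]
      simp only [mul_assoc]
    have h2 : bd (wedge j z) (insert j H) =
        - ∑ k ∈ (insert j H)ᶜ, ksgn K j H * ksgn K k H * z (insert k H) := by
      simp only [bd]
      rw [← Finset.sum_neg_distrib]
      refine Finset.sum_congr rfl fun k hk => ?_
      have hk' : k ≠ j ∧ k ∉ H := by simpa [Finset.mem_compl, not_or] using hk
      have he : (insert k (insert j H)).erase j = insert k H := by
        rw [Finset.insert_comm, Finset.erase_insert]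
        simp [hH, hk'.1.symm]
      simp only [wedge, Finset.mem_insert, true_or, or_true, if_true, he]
      rw [Finset.insert_comm, ksgn_insert_self, ← mul_assoc,
        ksgn_swap j k H hH hk'.2 hk'.1.symm]
      ring
    rw [h1, h2]; ring
  · have h1 : wedge j (bd z) G = 0 := by simp [wedge, hj]
    rw [h1, sub_zero]
    unfold bd
    rw [Finset.sum_eq_single j]
    · simp only [wedge, Finset.mem_insert_self, if_true, Finset.erase_insert hj,
        ksgn_insert_self, ← mul_assoc, ksgn_mul_self, one_mul]
    · intro k _ hk
      simp [wedge, hj, hk.symm]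
    · intro h; simp [hj] at h

lemma bd_sub (y z : Finset (Fin n) → K) : bd (y - z) = bd y - bd z := by
  funext G; simp [bd, mul_sub, Finset.sum_sub_distrib]

lemma bd_add (y z : Finset (Fin n) → K) : bd (y + z) = bd y + bd z := by
  funext G; simp [bd, mul_add, Finset.sum_add_distrib]

lemma bd_smul (c : K) (z : Finset (Fin n) → K) : bd (c • z) = c • bd z := by
  funext G
  simp only [bd, Pi.smul_apply, smul_eq_mul, Finset.mul_sum]
  exact Finset.sum_congr rfl fun _ _ => by ring

lemma exists_of_bd_ne_zero {z : Finset (Fin n) → K} {G : Finset (Fin n)} (h : bd z G ≠ 0) :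
    ∃ j, j ∉ G ∧ z (insert j G) ≠ 0 := by
  obtain ⟨j, hj, hne⟩ := Finset.exists_ne_zero_of_sum_ne_zero h
  exact ⟨j, by simpa using hj, right_ne_zero_of_mul hne⟩

lemma of_wedge_ne_zero {j : Fin n} {z : Finset (Fin n) → K} {F : Finset (Fin n)}
    (h : wedge j z F ≠ 0) : j ∈ F ∧ z (F.erase j) ≠ 0 := by
  unfold wedge at h
  split_ifs at h with hj
  · exact ⟨hj, right_ne_zero_of_mul h⟩
  · exact absurd rfl h

lemma bd_bd (z : Finset (Fin n) → K) : bd (bd z) = 0 := by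
  funext G
  have h1 : bd (bd z) G = ∑ p ∈ Gᶜ ×ˢ Gᶜ, if p.1 = p.2 then 0 else
      ksgn K p.1 G * ksgn K p.2 (insert p.1 G) * z (insert p.2 (insert p.1 G)) := by
    rw [Finset.sum_product]
    refine Finset.sum_congr rfl fun j hj => ?_
    have hc : Gᶜ = insert j (insert j G)ᶜ := by
      have hj' : j ∉ G := by simpa using hj
      ext x; by_cases hx : x = j <;> simp [hx, hj']
    rw [hc, Finset.sum_insert (by simp), if_pos rfl, zero_add, bd, Finset.mul_sum]
    refine Finset.sum_congr rfl fun k hk => ?_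
    have hk' : j ≠ k := by rintro rfl; simp at hk
    rw [if_neg hk', mul_assoc]
  rw [h1, Pi.zero_apply]
  refine Finset.sum_involution (fun p _ => (p.2, p.1)) ?_ ?_ ?_ ?_
  · rintro ⟨j, k⟩ hp
    simp only [Finset.mem_product, Finset.mem_compl] at hp
    by_cases hjk : j = k
    · simp [hjk]
    · simp only [hjk, Ne.symm hjk, if_false]
      have hs := ksgn_swap (K := K) j k G hp.1 hp.2 hjk
      rw [Finset.insert_comm j k G, ← add_mul]
      have hz : ksgn K j G * ksgn K k (insert j G) + ksgn K k G * ksgn K j (insert k G) = 0 := by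
        have ha := ksgn_mul_self (K := K) j G
        have hb := ksgn_mul_self (K := K) k G
        have hc := ksgn_mul_self (K := K) k (insert j G)
        linear_combination (ksgn K j G * ksgn K k (insert j G) ) * (-hb) +
          (- ksgn K k G * ksgn K j (insert k G)) * hc + ksgn K k G * ksgn K k (insert j G) * hs
      rw [hz, zero_mul]
  · rintro ⟨j, k⟩ _ hne heq
    simp only [Prod.mk.injEq] at heq
    exact hne (by simp [heq.2])
  · rintro ⟨j, k⟩ hp
    simpa [and_comm] using hp
  · rintro ⟨j, k⟩ _
    rfl

/-- Acyclicity in degree `i` of a simplicial complex `Δ` filtered by a level function `τ`, provided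
that each level containing an `i`-element face is a cone-like block: toggling some fixed vertex `j`
stays inside the block.  A cycle is pushed to lower and lower levels by subtracting
`∂(e_j ∧ y)`, with `y` its part on the top level. -/
lemma acyclic_of_blocks (Δ : Finset (Fin n) → Prop) (τ : Finset (Fin n) → ℕ) (i : ℕ)
    (hΔ : ∀ F F', Δ F → F' ⊆ F → Δ F')
    (hτ : ∀ F F', Δ F → F' ⊆ F → τ F' ≤ τ F)
    (hj : ∀ F, Δ F → F.card = i → ∃ j, ∀ F', Δ F' → τ F' = τ F →
      Δ (insert j F') ∧ τ (insert j F') = τ F ∧ τ (F'.erase j) = τ F) :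
    ∀ (N : ℕ) (z : Finset (Fin n) → K), (∀ F, z F ≠ 0 → Δ F ∧ F.card = i ∧ τ F < N) →
      (∀ F, bd z F = 0) →
      ∃ y : Finset (Fin n) → K, (∀ F, y F ≠ 0 → Δ F ∧ F.card = i + 1) ∧ bd y = z := by
  intro N
  induction N with
  | zero =>
    intro z hz _
    refine ⟨0, fun F h => absurd rfl h, ?_⟩
    funext F
    by_contra hne
    have : z F ≠ 0 := fun h => hne (by simp [bd, h])
    exact absurd (hz F this).2.2 (by omega)
  | succ N ih =>
    intro z hz hcyc
    by_cases htop : ∃ F, z F ≠ 0 ∧ τ F = N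
    swap
    · refine ih z (fun F hF => ?_) hcyc
      obtain ⟨h1, h2, h3⟩ := hz F hF
      exact ⟨h1, h2, lt_of_le_of_ne (by omega) fun h => htop ⟨F, hF, h⟩⟩
    obtain ⟨F₀, hF₀, hN⟩ := htop
    obtain ⟨j, hjb⟩ := hj F₀ (hz F₀ hF₀).1 (hz F₀ hF₀).2.1
    rw [hN] at hjb
    set y : Finset (Fin n) → K := fun F => if τ F = N then z F else 0 with hy
    have hyz : ∀ F, y F ≠ 0 → z F ≠ 0 ∧ τ F = N := by
      intro F h
      simp only [hy] at h
      split_ifs at h with h'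
      · exact ⟨h, h'⟩
      · exact absurd rfl h
    -- On the top level, `∂ y` agrees with `∂ z = 0`, as lower levels are closed under faces.
    have hbdy : ∀ G, τ G = N → bd y G = 0 := by
      intro G hG
      rw [← hcyc G]
      refine Finset.sum_congr rfl fun k _ => ?_
      by_cases hk : z (insert k G) = 0
      · simp [hy, hk]
      · have h1 := hz _ hk
        have h2 := hτ _ G h1.1 (Finset.subset_insert k G)
        have : τ (insert k G) = N := by omega
        simp [hy, this]
    have hw : ∀ F, wedge j y F ≠ 0 → Δ F ∧ F.card = i + 1 ∧ τ F = N := by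
      intro F hF
      obtain ⟨hjF, hne⟩ := of_wedge_ne_zero hF
      obtain ⟨h1, h2⟩ := hyz _ hne
      obtain ⟨h3, h4, _⟩ := hjb _ (hz _ h1).1 h2
      rw [Finset.insert_erase hjF] at h3 h4
      have := (hz _ h1).2.1
      have := Finset.card_erase_add_one hjF
      exact ⟨h3, by omega, h4⟩
    have hsupp : ∀ F, (z - bd (wedge j y)) F ≠ 0 → Δ F ∧ F.card = i ∧ τ F < N := by
      intro F hF
      have hgen : Δ F ∧ F.card = i ∧ τ F ≤ N := by
        by_cases h : z F = 0
        · have : bd (wedge j y) F ≠ 0 := fun h' => hF (by simp [h, h'])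
          obtain ⟨k, hk, hne⟩ := exists_of_bd_ne_zero this
          obtain ⟨h1, h2, h3⟩ := hw _ hne
          rw [Finset.card_insert_of_notMem hk] at h2
          have hle := hτ _ F h1 (Finset.subset_insert k F)
          exact ⟨hΔ _ F h1 (Finset.subset_insert k F), by omega, by omega⟩
        · obtain ⟨h1, h2, h3⟩ := hz F h
          exact ⟨h1, h2, by omega⟩
      refine ⟨hgen.1, hgen.2.1, lt_of_le_of_ne hgen.2.2 fun hFN => hF ?_⟩
      have h0 : wedge j (bd y) F = 0 := by
        by_contra hne
        obtain ⟨hjF, hne'⟩ := of_wedge_ne_zero hne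
        exact hne' (hbdy _ (hjb F hgen.1 hFN).2.2)
      rw [Pi.sub_apply, bd_wedge, h0]
      simp [hy, hFN]
    have hcyc' : ∀ F, bd (z - bd (wedge j y)) F = 0 := by
      intro F
      rw [bd_sub, Pi.sub_apply, hcyc F, bd_bd]; simp
    obtain ⟨x, hx1, hx2⟩ := ih (z - bd (wedge j y)) hsupp hcyc'
    refine ⟨x + wedge j y, fun F hF => ?_, ?_⟩
    · by_cases h : x F = 0
      · have : wedge j y F ≠ 0 := fun h' => hF (by simp [h, h'])
        exact ⟨(hw F this).1, (hw F this).2.1⟩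
      · exact hx1 F h
    · rw [bd_add, hx2]; simp

end Koszul

/-! ### The multigraded strands as complexes of chains of the simplex -/

section Strand

variable {K : Type} [Field K] {n : ℕ}

/-- The faces of the upper Koszul complex of `I` in multidegree `a`. -/
def Face (I : Ideal (S K n)) (a : Fin n →₀ ℕ) (F : Finset (Fin n)) : Prop :=
  expF F ≤ a ∧ (monomial (a - expF F) (1 : K) : S K n) ∈ I

open Classical in
/-- Extension by zero of a chain of the strand to a chain of the full simplex. -/
noncomputable def extz {I : Ideal (S K n)} {a : Fin n →₀ ℕ} {i : ℕ} (x : KB I a i →₀ K) :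
    Finset (Fin n) → K :=
  fun F => if h : F.card = i ∧ expF F ≤ a ∧ (monomial (a - expF F) (1 : K) : S K n) ∈ I
    then x ⟨F, h⟩ else 0

variable {I : Ideal (S K n)} {a : Fin n →₀ ℕ} {i : ℕ}

lemma extz_add (x y : KB I a i →₀ K) : extz (x + y) = extz x + extz y := by
  funext F; simp only [extz, Pi.add_apply]; split_ifs <;> simp

lemma extz_smul (c : K) (x : KB I a i →₀ K) : extz (c • x) = c • extz x := by
  funext F; simp only [extz, Pi.smul_apply]; split_ifs <;> simp

lemma extz_zero : extz (0 : KB I a i →₀ K) = 0 := by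
  funext F; simp [extz]

lemma extz_sum {ι : Type} (s : Finset ι) (f : ι → KB I a i →₀ K) :
    extz (∑ j ∈ s, f j) = ∑ j ∈ s, extz (f j) := by
  classical
  induction s using Finset.induction_on with
  | empty => simp [extz_zero]
  | insert j s hj ih => rw [Finset.sum_insert hj, Finset.sum_insert hj, extz_add, ih]

lemma extz_single (F : KB I a i) (c : K) (G : Finset (Fin n)) :
    extz (Finsupp.single F c) G = if F.1 = G then c else 0 := by
  classical
  unfold extz
  split_ifs with h h' h'
  · subst h'; simp
  · rw [Finsupp.single_apply, if_neg]
    rintro rfl; exact h' rfl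
  · subst h'; exact absurd F.2 h
  · rfl

lemma extz_injective : Function.Injective (extz : (KB I a i →₀ K) → _) := by
  intro x y h
  ext F
  have := congrFun h F.1
  simpa only [extz, dif_pos F.2] using this

lemma extz_supp (x : KB I a i →₀ K) (F : Finset (Fin n)) (h : extz x F ≠ 0) :
    Face I a F ∧ F.card = i := by
  unfold extz at h
  split_ifs at h with h'
  · exact ⟨h'.2, h'.1⟩
  · exact absurd rfl h

lemma exists_extz (z : Finset (Fin n) → K) (hz : ∀ F, z F ≠ 0 → Face I a F ∧ F.card = i) :
    ∃ x : KB I a i →₀ K, extz x = z := by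
  classical
  refine ⟨Finsupp.equivFunOnFinite.symm fun F => z F.1, ?_⟩
  funext F
  unfold extz
  split_ifs with h
  · simp
  · by_contra hne
    exact h ⟨(hz F (Ne.symm hne)).2, (hz F (Ne.symm hne)).1⟩

lemma extz_kd (x : KB I a (i + 1) →₀ K) : extz (kd I a i x) = bd (extz x) := by
  classical
  induction x using Finsupp.induction_linear with
  | zero => rw [map_zero, extz_zero, extz_zero]; funext G; simp [bd]
  | add x y hx hy => rw [map_add, extz_add, extz_add, bd_add, hx, hy]
  | single F c =>
    have h1 : Finsupp.single F c = c • Finsupp.single F (1 : K) := by simp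
    rw [h1, map_smul, extz_smul, extz_smul, bd_smul]
    congr 1
    funext G
    simp only [kd, Finsupp.lsum_single, LinearMap.toSpanSingleton_apply, one_smul]
    rw [extz_sum, Finset.sum_apply]
    simp only [extz_smul, Pi.smul_apply, extz_single, smul_eq_mul, bd]
    rw [Finset.sum_attach F.1 (fun j => (-1 : K) ^ ((F.1.filter (fun x => x < j)).card) *
      if F.1.erase j = G then (1 : K) else 0)]
    simp only [mul_ite, mul_one, mul_zero]
    rw [← Finset.sum_filter, ← Finset.sum_filter]
    refine Finset.sum_congr ?_ ?_
    · ext j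
      simp only [Finset.mem_filter, Finset.mem_compl]
      constructor
      · rintro ⟨hj, rfl⟩; exact ⟨by simp, (Finset.insert_erase hj).symm⟩
      · rintro ⟨hj, h⟩; rw [h]; exact ⟨by simp, Finset.erase_insert hj⟩
    · intro j hj
      simp only [Finset.mem_filter, Finset.mem_compl] at hj
      rw [hj.2]
      exact ksgn_insert_self (K := K) j G

lemma not_nontrivial_Hmod
    (h : ∀ z : Finset (Fin n) → K, (∀ F, z F ≠ 0 → Face I a F ∧ F.card = i + 1) →
      (∀ F, bd z F = 0) →
      ∃ y : Finset (Fin n) → K, (∀ F, y F ≠ 0 → Face I a F ∧ F.card = i + 1 + 1) ∧ bd y = z) :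
    ¬ Nontrivial (Hmod I a (i + 1)) := by
  rw [not_nontrivial_iff_subsingleton, Submodule.subsingleton_iff_eq_bot, eq_bot_iff,
    Submodule.map_le_iff_le_comap, Submodule.comap_bot]
  intro x hx
  rw [Submodule.ker_mkQ]
  have hx' : kd I a i x = 0 := hx
  obtain ⟨y, hy, hyx⟩ := h (extz x) (extz_supp x) (fun F => by
    rw [← extz_kd, hx', extz_zero]; rfl)
  obtain ⟨y', rfl⟩ := exists_extz y hy
  exact ⟨y', extz_injective (by rw [extz_kd, hyx])⟩

lemma nontrivial_Hmod (z : Finset (Fin n) → K) (hz : ∀ F, z F ≠ 0 → Face I a F ∧ F.card = i)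
    (hcyc : bd z = 0) (hne : z ≠ 0) (hemp : ∀ F, Face I a F → F.card ≠ i + 1) :
    Nontrivial (Hmod I a i) := by
  obtain ⟨x, rfl⟩ := exists_extz z hz
  by_contra hcon
  rw [not_nontrivial_iff_subsingleton, Submodule.subsingleton_iff_eq_bot,
    eq_bot_iff, Submodule.map_le_iff_le_comap, Submodule.comap_bot, Submodule.ker_mkQ] at hcon
  have hx : x ∈ LinearMap.ker (kdOut I a i) := by
    cases i with
    | zero => simp [kdOut]
    | succ i =>
      change kd I a i x = 0
      exact extz_injective (by rw [extz_kd, hcyc, extz_zero])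
  obtain ⟨y, rfl⟩ := hcon hx
  have : y = 0 := by
    ext F; exact absurd F.2.1 (hemp F.1 F.2.2)
  exact hne (by rw [this, map_zero, extz_zero])

end Strand

/-! ### Rooted trees and the demands satisfied by multisets of edges -/

/-- A rooted tree on `Fin n` with at least two vertices: a root `r`, a parent function `p`
(its value at `r` is irrelevant), an injective height function `pos` increasing away from the root,
and the lowest non-root vertex `u`.  The edges are the pairs `{v, p v}` with `v ≠ r`; a multiset of
edges is a function `T : Fin n → ℕ` with `T r = 0`, where `T v` is the multiplicity of
`{v, p v}`. -/
structure RootedTree (n : ℕ) where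
  r : Fin n
  u : Fin n
  p : Fin n → Fin n
  pos : Fin n → ℕ
  pos_inj : Function.Injective pos
  pos_p : ∀ v, v ≠ r → pos (p v) < pos v
  u_ne : u ≠ r
  u_min : ∀ v, v ≠ r → pos u ≤ pos v

namespace RootedTree

variable {n : ℕ} (R : RootedTree n)

lemma p_u : R.p R.u = R.r := by
  by_contra h
  have h1 := R.pos_p R.u R.u_ne
  have h2 := R.u_min _ h
  omega

/-- The degree vector of a multiset of edges. -/
def dg (T : Fin n → ℕ) (x : Fin n) : ℕ := T x + ∑ v, if R.p v = x then T v else 0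

lemma dg_add (T T' : Fin n → ℕ) (x : Fin n) : R.dg (T + T') x = R.dg T x + R.dg T' x := by
  have : (∑ v, if R.p v = x then (T + T') v else 0) =
      (∑ v, if R.p v = x then T v else 0) + ∑ v, if R.p v = x then T' v else 0 := by
    rw [← Finset.sum_add_distrib]
    refine Finset.sum_congr rfl fun v _ => ?_
    split_ifs <;> simp
  unfold dg
  rw [this, Pi.add_apply]
  ring

lemma dg_single (v : Fin n) (x : Fin n) :
    R.dg (Pi.single v 1) x = (if x = v then 1 else 0) + (if x = R.p v then 1 else 0) := by
  unfold dg
  rw [Finset.sum_eq_single v]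
  · simp [Pi.single_apply, eq_comm]
  · intro b _ hb; simp [hb]
  · simp

/-- The parent edge `{q v, p (q v)}` of `{v, p v}`; children of the root other than `u` have the
edge `{u, r}` as parent edge. -/
def q (v : Fin n) : Fin n := if R.p v = R.r then R.u else R.p v

/-- The endpoint of the parent edge of `{v, p v}` that differs from `p v`. -/
def o (v : Fin n) : Fin n := if R.p v = R.r then R.u else R.p (R.p v)

lemma dg_q (v : Fin n) (x : Fin n) :
    R.dg (Pi.single (R.q v) 1) x = (if x = R.o v then 1 else 0) + (if x = R.p v then 1 else 0) := by
  rw [dg_single]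
  unfold q o
  split_ifs <;> simp_all [p_u]

lemma q_ne (v : Fin n) : R.q v ≠ R.r := by
  unfold q; split_ifs with h
  · exact R.u_ne
  · exact h

lemma pos_u_lt {v : Fin n} (hv : v ≠ R.r) (hu : v ≠ R.u) : R.pos R.u < R.pos v :=
  lt_of_le_of_ne (R.u_min v hv) fun h => hu (R.pos_inj h).symm

lemma pos_q {v : Fin n} (hv : v ≠ R.r) (hu : v ≠ R.u) : R.pos (R.q v) < R.pos v := by
  unfold q; split_ifs with h
  · exact R.pos_u_lt hv hu
  · exact R.pos_p v hv

lemma pos_o {v : Fin n} (hv : v ≠ R.r) (hu : v ≠ R.u) : R.pos (R.o v) < R.pos v := by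
  unfold o; split_ifs with h
  · exact R.pos_u_lt hv hu
  · exact (R.pos_p _ h).trans (R.pos_p v hv)

/-- `T` is a multiset of `s` edges. -/
def Adm (s : ℕ) (T : Fin n → ℕ) : Prop := T R.r = 0 ∧ ∑ v, T v = s

lemma Adm.le {R : RootedTree n} {s : ℕ} {T : Fin n → ℕ} (h : R.Adm s T) (v : Fin n) : T v ≤ s := by
  rw [← h.2]; exact Finset.single_le_sum (fun _ _ => Nat.zero_le _) (Finset.mem_univ v)

lemma Adm.add {R : RootedTree n} {s t : ℕ} {T T' : Fin n → ℕ} (h : R.Adm s T) (h' : R.Adm t T') :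
    R.Adm (s + t) (T + T') := by
  refine ⟨by simp [h.1, h'.1], ?_⟩
  simp [Finset.sum_add_distrib, h.2, h'.2]

lemma adm_single {v : Fin n} (hv : v ≠ R.r) : R.Adm 1 (Pi.single v 1) :=
  ⟨by simp [hv.symm], by simp⟩

/-- `T` is a multiset of `s` edges showing that `F` is a face in multidegree `a`. -/
def Feas (a : Fin n → ℕ) (s : ℕ) (F : Finset (Fin n)) (T : Fin n → ℕ) : Prop :=
  R.Adm s T ∧ ∀ x, s + (if x ∈ F then 1 else 0) ≤ a x + R.dg T x

lemma Feas.mono {R : RootedTree n} {a : Fin n → ℕ} {s : ℕ} {F F' : Finset (Fin n)} {T : Fin n → ℕ}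
    (h : R.Feas a s F T) (hF : F' ⊆ F) : R.Feas a s F' T := by
  refine ⟨h.1, fun x => le_trans ?_ (h.2 x)⟩
  have := @hF x
  split_ifs <;> simp_all

/-- The weight of a multiset of `s` edges.  Its base is so large that comparing weights is comparing
multiplicities lexicographically, starting from the highest vertex. -/
def wt (s : ℕ) (T : Fin n → ℕ) : ℕ := ∑ v, T v * (n * s + 2) ^ R.pos v

lemma wt_add (s : ℕ) (T T' : Fin n → ℕ) : R.wt s (T + T') = R.wt s T + R.wt s T' := by
  simp [wt, add_mul, Finset.sum_add_distrib]

lemma wt_single (s : ℕ) (v : Fin n) : R.wt s (Pi.single v 1) = (n * s + 2) ^ R.pos v := by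
  unfold wt
  rw [Finset.sum_eq_single v] <;> simp +contextual

lemma wt_lt {s : ℕ} {T T' : Fin n → ℕ} (hT' : ∀ v, T' v ≤ s) {v : Fin n}
    (hv : T' v < T v) (hu : ∀ x, R.pos v < R.pos x → T' x = T x) : R.wt s T' < R.wt s T := by
  set B := n * s + 2 with hB
  have hlow : ∑ x ∈ Finset.univ.filter (fun x => R.pos x < R.pos v), T' x * B ^ R.pos x
      < B ^ R.pos v := by
    rcases Nat.eq_zero_or_pos (R.pos v) with h0 | h0
    · simp [h0]
    · have h1 : ∑ x ∈ Finset.univ.filter (fun x => R.pos x < R.pos v), T' x * B ^ R.pos x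
          ≤ ∑ x : Fin n, s * B ^ (R.pos v - 1) := by
        refine (Finset.sum_le_sum (g := fun _ => s * B ^ (R.pos v - 1)) fun x hx => ?_).trans
          (Finset.sum_le_sum_of_subset (Finset.filter_subset _ _))
        have hx' : R.pos x < R.pos v := by simpa using hx
        exact Nat.mul_le_mul (hT' x) (Nat.pow_le_pow_right (by omega) (by omega))
      have h2 : B ^ R.pos v = B * B ^ (R.pos v - 1) := by
        rw [← pow_succ', Nat.sub_add_cancel h0]
      have h3 : 0 < B ^ (R.pos v - 1) := Nat.pow_pos (by omega)
      rw [h2]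
      refine lt_of_le_of_lt h1 ?_
      simp only [Finset.sum_const, Finset.card_univ, Fintype.card_fin, smul_eq_mul, ← mul_assoc]
      exact Nat.mul_lt_mul_of_pos_right (by omega) h3
  have hsplit : ∀ U : Fin n → ℕ, R.wt s U =
      (∑ x ∈ Finset.univ.filter (fun x => R.pos x < R.pos v), U x * B ^ R.pos x) +
      (U v * B ^ R.pos v +
        ∑ x ∈ Finset.univ.filter (fun x => R.pos v < R.pos x), U x * B ^ R.pos x) := by
    intro U
    have h1 : (Finset.univ.filter (fun x => ¬ R.pos x < R.pos v)) =
        insert v (Finset.univ.filter (fun x => R.pos v < R.pos x)) := by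
      ext x
      simp only [Finset.mem_filter, Finset.mem_univ, true_and, Finset.mem_insert, not_lt]
      rw [le_iff_eq_or_lt]
      exact or_congr ⟨fun h => (R.pos_inj h).symm, fun h => by rw [h]⟩ Iff.rfl
    have h2 := Finset.sum_filter_add_sum_filter_not Finset.univ (fun x => R.pos x < R.pos v)
      (fun x => U x * B ^ R.pos x)
    rw [h1, Finset.sum_insert (by simp)] at h2
    exact h2.symm
  have hhigh : ∑ x ∈ Finset.univ.filter (fun x => R.pos v < R.pos x), T' x * B ^ R.pos x =
      ∑ x ∈ Finset.univ.filter (fun x => R.pos v < R.pos x), T x * B ^ R.pos x :=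
    Finset.sum_congr rfl fun x hx => by rw [hu x (by simpa using hx)]
  rw [hsplit T', hsplit T, hhigh]
  have h4 : (T' v + 1) * B ^ R.pos v ≤ T v * B ^ R.pos v := Nat.mul_le_mul_right _ hv
  rw [add_mul, one_mul] at h4
  omega

lemma exists_top_diff {T T' : Fin n → ℕ} (h : T' ≠ T) :
    ∃ v, T' v ≠ T v ∧ ∀ x, R.pos v < R.pos x → T' x = T x := by
  obtain ⟨w, hw⟩ := Function.ne_iff.mp h
  obtain ⟨v, hv, hmax⟩ := Finset.exists_max_image (Finset.univ.filter fun x => T' x ≠ T x) R.pos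
    ⟨w, by simpa using hw⟩
  refine ⟨v, by simpa using hv, fun x hx => ?_⟩
  by_contra hne
  exact absurd (hmax x (by simpa using hne)) (by omega)

lemma exists_of_wt_lt {s : ℕ} {T T' : Fin n → ℕ} (hT : ∀ v, T v ≤ s)
    (h : R.wt s T' < R.wt s T) :
    ∃ v, T' v < T v ∧ ∀ x, R.pos v < R.pos x → T' x = T x := by
  obtain ⟨v, hv, hx⟩ := R.exists_top_diff (T := T) (T' := T') (by rintro rfl; omega)
  refine ⟨v, lt_of_le_of_ne (le_of_not_gt fun hlt => ?_) hv, hx⟩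
  have := R.wt_lt hT hlt (fun x h => (hx x h).symm)
  omega

lemma wt_inj {s : ℕ} {T T' : Fin n → ℕ} (hT : ∀ v, T v ≤ s) (hT' : ∀ v, T' v ≤ s)
    (h : R.wt s T' = R.wt s T) : T' = T := by
  by_contra hne
  obtain ⟨v, hv, hx⟩ := R.exists_top_diff hne
  rcases lt_or_gt_of_ne hv with h1 | h1
  · have := R.wt_lt hT' h1 hx; omega
  · have := R.wt_lt hT h1 (fun x h => (hx x h).symm); omega

/-- If a demand `F` leaves slack at a vertex `v ∉ {r, u}` whose edge is used, that edge may be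
replaced by its parent edge, which lowers the weight.  In terms of ideals this is the linear
relation `x_v m_T = x_{o v} m_{T'}`. -/
lemma exchange {a : Fin n → ℕ} {s : ℕ} {F : Finset (Fin n)} {T : Fin n → ℕ} (h : R.Feas a s F T)
    {v : Fin n} (hu : v ≠ R.u) (hT : 0 < T v)
    (hs : s + (if v ∈ F then 1 else 0) < a v + R.dg T v) :
    ∃ T', R.Feas a s F T' ∧ R.wt s T' < R.wt s T := by
  have hv : v ≠ R.r := by rintro rfl; have := h.1.1; omega
  obtain ⟨T₀, rfl⟩ : ∃ T₀ : Fin n → ℕ, T = T₀ + Pi.single v 1 := by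
    refine ⟨T - Pi.single v 1, ?_⟩
    funext x
    by_cases hx : x = v
    · subst hx; simp; omega
    · simp [hx]
  refine ⟨T₀ + Pi.single (R.q v) 1, ⟨⟨?_, ?_⟩, fun x => ?_⟩, ?_⟩
  · have := h.1.1
    simp [hv.symm, (R.q_ne v).symm] at this ⊢
    exact this
  · have := h.1.2
    simp only [Pi.add_apply, Finset.sum_add_distrib, Finset.sum_pi_single', Finset.mem_univ,
      if_true] at this ⊢
    exact this
  · have := h.2 x
    rw [dg_add, dg_single] at this hs
    rw [dg_add, dg_q]
    by_cases hx : x = v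
    · subst hx
      simp only [if_true] at hs
      split_ifs at * <;> omega
    · simp only [hx, if_false] at this
      split_ifs at * <;> omega
  · rw [wt_add, wt_add, wt_single, wt_single]
    have := Nat.pow_lt_pow_right (a := n * s + 2) (by omega) (R.pos_q hv hu)
    omega

/-- The least weight of a multiset of edges supporting the face `F`. -/
noncomputable def tau (a : Fin n → ℕ) (s : ℕ) (F : Finset (Fin n)) : ℕ :=
  sInf {w | ∃ T, R.Feas a s F T ∧ R.wt s T = w}

lemma tau_le {a : Fin n → ℕ} {s : ℕ} {F : Finset (Fin n)} {T : Fin n → ℕ} (h : R.Feas a s F T) :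
    R.tau a s F ≤ R.wt s T := Nat.sInf_le ⟨T, h, rfl⟩

lemma exists_tau {a : Fin n → ℕ} {s : ℕ} {F : Finset (Fin n)} (h : ∃ T, R.Feas a s F T) :
    ∃ T, R.Feas a s F T ∧ R.wt s T = R.tau a s F := by
  obtain ⟨T, hT⟩ := h
  exact Nat.sInf_mem (s := {w | ∃ T, R.Feas a s F T ∧ R.wt s T = w}) ⟨_, T, hT, rfl⟩

/-- The block of the optimal multiset `T` is stable under deleting a vertex `j` that is not
the child end of an edge of `T` other than `{u, r}`. -/
lemma tau_erase {a : Fin n → ℕ} {s : ℕ} {F : Finset (Fin n)} {T : Fin n → ℕ} {j : Fin n}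
    (h : R.Feas a s F T) (hmin : R.wt s T = R.tau a s F) (hj : j = R.u ∨ T j = 0) :
    R.tau a s (F.erase j) = R.tau a s F := by
  have hfe := h.mono (F.erase_subset j)
  refine le_antisymm (hmin ▸ R.tau_le hfe) ?_
  obtain ⟨T₂, hT₂, hw⟩ := R.exists_tau ⟨T, hfe⟩
  rw [← hw, ← hmin]
  by_contra hlt
  obtain ⟨v, hv, hx⟩ := R.exists_of_wt_lt (fun v => h.1.le v) (lt_of_not_ge hlt)
  have hvr : v ≠ R.r := by rintro rfl; have := h.1.1; omega
  have hvu : v ≠ R.u := by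
    rintro rfl
    -- a difference at the lowest edge only contradicts the equality of the sizes
    have : ∑ x, T₂ x < ∑ x, T x := by
      refine Finset.sum_lt_sum (fun x _ => ?_) ⟨_, Finset.mem_univ _, hv⟩
      by_cases hxu : x = R.u
      · subst hxu; exact hv.le
      · by_cases hxr : x = R.r
        · rw [hxr, hT₂.1.1]; exact Nat.zero_le _
        · exact (hx x (R.pos_u_lt hxr hxu)).le
    rw [hT₂.1.2, h.1.2] at this
    omega
  have hvj : v ≠ j := by
    rintro rfl
    rcases hj with hj | hj
    · exact hvu hj
    · omega
  have hdg : R.dg T₂ v < R.dg T v := by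
    unfold dg
    refine add_lt_add_of_lt_of_le hv (Finset.sum_le_sum fun x _ => ?_)
    split_ifs with hp
    · by_cases hxr : x = R.r
      · rw [hxr, hT₂.1.1]; exact Nat.zero_le _
      · exact (hx x (hp ▸ R.pos_p x hxr)).le
    · exact le_rfl
  have hfv := hT₂.2 v
  simp only [Finset.mem_erase, hvj, ne_eq, not_false_eq_true, true_and] at hfv
  obtain ⟨T', hT', hw'⟩ := R.exchange h hvu (by omega) (by omega)
  have := R.tau_le hT'
  omega

/-- Each block meeting the faces with more than `min s (n - 2)` elements is stable under toggling a
suitable vertex. -/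
lemma exists_toggle (a : Fin n → ℕ) (s : ℕ) (F : Finset (Fin n)) (hF : ∃ T, R.Feas a s F T)
    (hcard : min s (n - 2) < F.card) :
    ∃ j, ∀ F', (∃ T, R.Feas a s F' T) → R.tau a s F' = R.tau a s F →
      (∃ T, R.Feas a s (insert j F') T) ∧ R.tau a s (insert j F') = R.tau a s F ∧
      R.tau a s (F'.erase j) = R.tau a s F := by
  obtain ⟨T, hT, hw⟩ := R.exists_tau hF
  set V := Finset.univ.filter (fun v => T v ≠ 0 ∧ v ≠ R.u) with hV
  have hV1 : V.card ≤ s := by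
    rw [← hT.1.2, Finset.card_eq_sum_ones]
    refine (Finset.sum_le_sum fun v hv => ?_).trans
      (Finset.sum_le_sum_of_subset (Finset.subset_univ V))
    have : T v ≠ 0 ∧ v ≠ R.u := by simpa [hV] using hv
    omega
  have hV2 : V.card ≤ n - 2 := by
    have hsub : V ⊆ (Finset.univ.erase R.r).erase R.u := by
      intro v hv
      have : T v ≠ 0 ∧ v ≠ R.u := by simpa [hV] using hv
      simp only [Finset.mem_erase, Finset.mem_univ, and_true]
      exact ⟨this.2, by rintro rfl; exact this.1 hT.1.1⟩
    refine (Finset.card_le_card hsub).trans ?_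
    rw [Finset.card_erase_of_mem (by simp [R.u_ne]), Finset.card_erase_of_mem (by simp)]
    simp; omega
  obtain ⟨j, hjF, hjV⟩ := Finset.exists_mem_notMem_of_card_lt_card
    (lt_of_le_of_lt (le_min hV1 hV2) hcard)
  have hj : j = R.u ∨ T j = 0 := by
    by_contra hcon
    push Not at hcon
    exact hjV (by simp [hV, hcon])
  refine ⟨j, fun F' hF' hτ => ?_⟩
  obtain ⟨T', hT', hw'⟩ := R.exists_tau hF'
  obtain rfl : T' = T := R.wt_inj hT.1.le hT'.1.le (by omega)
  have hins : R.Feas a s (insert j F') T' := by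
    refine ⟨hT.1, fun x => ?_⟩
    by_cases hx : x = j
    · subst hx; simpa [hjF] using hT.2 x
    · simpa [hx] using hT'.2 x
  refine ⟨⟨T', hins⟩, le_antisymm (hw ▸ R.tau_le hins) ?_, hτ ▸ R.tau_erase hT' hw' hj⟩
  obtain ⟨T₃, hT₃, hw₃⟩ := R.exists_tau ⟨T', hins⟩
  have := R.tau_le (hT₃.mono (Finset.subset_insert j F'))
  omega

end RootedTree

/-! ### Powers of the complementary edge ideal of a rooted tree -/

namespace RootedTree

variable {n : ℕ} (R : RootedTree n)

lemma Adm.split {R : RootedTree n} {s : ℕ} {T : Fin n → ℕ} (h : R.Adm (s + 1) T) :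
    ∃ v T₀, v ≠ R.r ∧ R.Adm s T₀ ∧ T = T₀ + Pi.single v 1 := by
  obtain ⟨v, _, hv⟩ := Finset.exists_ne_zero_of_sum_ne_zero (s := Finset.univ) (f := T)
    (by rw [h.2]; omega)
  have hvr : v ≠ R.r := by rintro rfl; exact hv h.1
  have hT : T = (T - Pi.single v 1) + Pi.single v 1 := by
    funext x
    by_cases hx : x = v
    · subst hx; simp; omega
    · simp [hx]
  refine ⟨v, T - Pi.single v 1, hvr, ⟨by simp [h.1], ?_⟩, hT⟩
  have h2 := h.2
  rw [hT] at h2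
  simpa [Finset.sum_add_distrib] using h2

lemma Adm.eq_zero {R : RootedTree n} {T : Fin n → ℕ} (h : R.Adm 0 T) : T = 0 := by
  funext x; have := h.le x; simpa using this

lemma p_ne {v : Fin n} (hv : v ≠ R.r) : R.p v ≠ v := by
  intro h; have := R.pos_p v hv; rw [h] at this; omega

lemma dg_zero (x : Fin n) : R.dg 0 x = 0 := by simp [dg]

lemma dg_nsmul (c : ℕ) (T : Fin n → ℕ) (x : Fin n) : R.dg (c • T) x = c * R.dg T x := by
  simp [dg, mul_add, Finset.mul_sum]

lemma dg_single_le {v : Fin n} (hv : v ≠ R.r) (x : Fin n) : R.dg (Pi.single v 1) x ≤ 1 := by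
  have := R.p_ne hv
  rw [dg_single]
  split_ifs with h1 h2
  · exact absurd (h2.symm.trans h1) this
  all_goals omega

lemma Adm.dg_le {R : RootedTree n} {s : ℕ} : ∀ {T : Fin n → ℕ}, R.Adm s T → ∀ x, R.dg T x ≤ s := by
  induction s with
  | zero => intro T h x; rw [h.eq_zero, dg_zero]
  | succ s ih =>
    intro T h x
    obtain ⟨v, T₀, hv, hT₀, rfl⟩ := h.split
    have h1 := ih hT₀ x
    have h2 := R.dg_single_le hv x
    rw [dg_add]; omega

lemma Adm.sum_dg {R : RootedTree n} {s : ℕ} {T : Fin n → ℕ} (h : R.Adm s T) :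
    ∑ x, R.dg T x = 2 * s := by
  unfold dg
  rw [Finset.sum_add_distrib, Finset.sum_comm]
  simp [h.2]; ring

/-- The exponents of the monomials `x_{[n]}^s / (product of s edges)`. -/
def gens (s : ℕ) : Set (Fin n →₀ ℕ) := {c | ∃ T, R.Adm s T ∧ ∀ x, c x + R.dg T x = s}

open scoped Pointwise in
lemma gens_succ (s : ℕ) : R.gens (s + 1) = R.gens s + R.gens 1 := by
  ext c
  rw [Set.mem_add]
  constructor
  · rintro ⟨T, hT, hc⟩
    obtain ⟨v, T₀, hv, hT₀, rfl⟩ := hT.split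
    have hv1 := R.adm_single hv
    refine ⟨Finsupp.equivFunOnFinite.symm fun x => s - R.dg T₀ x, ⟨T₀, hT₀, fun x => ?_⟩,
      Finsupp.equivFunOnFinite.symm fun x => 1 - R.dg (Pi.single v 1) x,
      ⟨_, hv1, fun x => ?_⟩, ?_⟩
    · have := hT₀.dg_le x
      simp only [Finsupp.equivFunOnFinite_symm_apply_apply]; omega
    · have := hv1.dg_le x
      simp only [Finsupp.equivFunOnFinite_symm_apply_apply]; omega
    · ext x
      have h1 := hT₀.dg_le x
      have h2 := hv1.dg_le x
      have h3 := hc x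
      rw [dg_add] at h3
      simp only [Finsupp.add_apply, Finsupp.equivFunOnFinite_symm_apply_apply]; omega
  · rintro ⟨c₁, ⟨T₁, h₁, hc₁⟩, c₂, ⟨T₂, h₂, hc₂⟩, rfl⟩
    refine ⟨T₁ + T₂, h₁.add h₂, fun x => ?_⟩
    have := hc₁ x
    have := hc₂ x
    rw [dg_add, Finsupp.add_apply]; omega

/-- `R` presents the tree `G`: the edges of `G` are the pairs `{v, p v}` with `v ≠ r`. -/
def Presents (G : SimpleGraph (Fin n)) : Prop :=
  ∀ i j, G.Adj i j ↔ (i ≠ R.r ∧ j = R.p i) ∨ (j ≠ R.r ∧ i = R.p j)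

end RootedTree

lemma expF_apply {n : ℕ} (F : Finset (Fin n)) (x : Fin n) :
    expF F x = if x ∈ F then 1 else 0 := by
  simp [expF, Finsupp.finsetSum_apply, Finsupp.single_apply]

section Ideals

variable {K : Type} [Field K] {n : ℕ} {R : RootedTree n} {G : SimpleGraph (Fin n)}

lemma compIdeal_eq (hR : R.Presents G) :
    compIdeal K n G = Ideal.span ((fun c => (monomial c 1 : S K n)) '' R.gens 1) := by
  have key : ∀ v, v ≠ R.r → ∀ c : Fin n →₀ ℕ,
      (∀ x, c x + R.dg (Pi.single v 1) x = 1) ↔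
        c = aexp n - Finsupp.single v 1 - Finsupp.single (R.p v) 1 := by
    intro v hv c
    have hne := R.p_ne hv
    rw [Finsupp.ext_iff]
    refine forall_congr' fun x => ?_
    have h1 := R.dg_single_le hv x
    have h2 := R.dg_single v x
    simp only [Finsupp.tsub_apply, aexp, expF_apply, Finset.mem_univ, if_true,
      Finsupp.single_apply]
    rw [h2] at h1 ⊢
    simp only [eq_comm (a := v) (b := x), eq_comm (a := R.p v) (b := x)]
    split_ifs at * <;> omega
  unfold compIdeal
  congr 1
  ext f
  constructor
  · rintro ⟨i, j, hij, rfl⟩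
    rcases (hR i j).1 hij with ⟨hi, rfl⟩ | ⟨hj, rfl⟩
    · exact ⟨_, ⟨_, R.adm_single hi, (key i hi _).2 rfl⟩, rfl⟩
    · exact ⟨_, ⟨_, R.adm_single hj, (key j hj _).2 rfl⟩, by rw [tsub_right_comm]⟩
  · rintro ⟨c, ⟨T, hT, hc⟩, rfl⟩
    obtain ⟨v, T₀, hv, hT₀, rfl⟩ := hT.split (s := 0)
    rw [hT₀.eq_zero, zero_add] at hc
    exact ⟨v, R.p v, (hR _ _).2 (Or.inl ⟨hv, rfl⟩), by rw [(key v hv c).1 hc]⟩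

open scoped Pointwise in
lemma compIdeal_pow_eq (hR : R.Presents G) (s : ℕ) :
    compIdeal K n G ^ s = Ideal.span ((fun c => (monomial c 1 : S K n)) '' R.gens s) := by
  induction s with
  | zero =>
    have : (0 : Fin n →₀ ℕ) ∈ R.gens 0 := ⟨0, ⟨rfl, by simp⟩, fun x => by simp [R.dg_zero]⟩
    rw [pow_zero, eq_comm, Ideal.one_eq_top, Ideal.eq_top_iff_one]
    exact Ideal.subset_span ⟨0, this, by simp⟩
  | succ s ih =>
    rw [pow_succ, ih, compIdeal_eq hR, Ideal.span_mul_span', R.gens_succ s]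
    congr 1
    ext f
    simp only [Set.mem_mul, Set.mem_image, Set.mem_add]
    constructor
    · rintro ⟨_, ⟨c, hc, rfl⟩, _, ⟨d, hd, rfl⟩, rfl⟩
      exact ⟨_, ⟨c, hc, d, hd, rfl⟩, by simp [monomial_mul]⟩
    · rintro ⟨_, ⟨c, hc, d, hd, rfl⟩, rfl⟩
      exact ⟨_, ⟨c, hc, rfl⟩, _, ⟨d, hd, rfl⟩, by simp [monomial_mul]⟩

/-- Faces are the sets `F` for which some product of `s` generators divides `x^(a - ε_F)`. -/
lemma face_iff (hR : R.Presents G) (s : ℕ) (a : Fin n →₀ ℕ) (F : Finset (Fin n)) :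
    Face (compIdeal K n G ^ s) a F ↔ ∃ T, R.Feas a s F T := by
  classical
  unfold Face
  rw [compIdeal_pow_eq hR, mem_ideal_span_monomial_image, support_monomial, if_neg one_ne_zero]
  simp only [Finset.mem_singleton, forall_eq]
  constructor
  · rintro ⟨hle, c, ⟨T, hT, hc⟩, hca⟩
    refine ⟨T, hT, fun x => ?_⟩
    have h1 := hle x
    have h2 := hc x
    have h3 := hca x
    rw [Finsupp.tsub_apply] at h3
    rw [expF_apply] at h1 h3
    omega
  · rintro ⟨T, hT, hx⟩
    have hle : expF F ≤ a := by
      intro x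
      have h1 := hx x
      have h2 := hT.dg_le x
      rw [expF_apply]
      omega
    refine ⟨hle, Finsupp.equivFunOnFinite.symm fun x => s - R.dg T x, ⟨T, hT, fun x => ?_⟩,
      fun x => ?_⟩
    · have := hT.dg_le x
      simp only [Finsupp.equivFunOnFinite_symm_apply_apply]; omega
    · have h1 := hx x
      have h2 := hT.dg_le x
      rw [Finsupp.tsub_apply, expF_apply]
      simp only [Finsupp.equivFunOnFinite_symm_apply_apply]; omega

/-- Upper bound for the projective dimension: the faces with the same minimal multiset of edges
form the blocks of `acyclic_of_blocks`, and `exists_toggle` provides the vertices to toggle. -/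
lemma le_of_nontrivial (hR : R.Presents G) (s i : ℕ) (a : Fin n →₀ ℕ)
    (h : Nontrivial (Hmod (compIdeal K n G ^ s) a i)) : i ≤ min s (n - 2) := by
  by_contra hlt
  obtain ⟨i, rfl⟩ : ∃ k, i = k + 1 := ⟨i - 1, by omega⟩
  refine not_nontrivial_Hmod (fun z hz hcyc => ?_) h
  simp only [face_iff hR] at hz ⊢
  -- any bound on the finitely many levels starts the induction
  refine acyclic_of_blocks (fun F => ∃ T, R.Feas a s F T) (R.tau a s) (i + 1) ?_ ?_ ?_
    ((∑ F, R.tau a s F) + 1) z ?_ hcyc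
  · rintro F F' ⟨T, hT⟩ hF
    exact ⟨T, hT.mono hF⟩
  · intro F F' hF hsub
    obtain ⟨T, hT, hw⟩ := R.exists_tau hF
    exact hw ▸ R.tau_le (hT.mono hsub)
  · intro F hF hcard
    exact R.exists_toggle a s F hF (by omega)
  · intro F hF
    refine ⟨(hz F hF).1, (hz F hF).2, Nat.lt_succ_of_le ?_⟩
    exact Finset.single_le_sum (f := R.tau a s) (fun _ _ => Nat.zero_le _) (Finset.mem_univ F)

/-- The wedge product of the vectors `e_v - e_{o v}`, `v ∈ Q`, is a nonzero Koszul cycle; each set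
`F` in its support arises by choosing one of `v`, `o v` for every `v ∈ Q`, hence, together
with the vertices `p v`, from a multiset of `|Q|` edges. -/
lemma exists_cycle (Q : Finset (Fin n)) : (∀ v ∈ Q, v ≠ R.r ∧ v ≠ R.u) →
    ∃ z : Finset (Fin n) → K, bd z = 0 ∧ z ≠ 0 ∧ ∀ F, z F ≠ 0 → F.card = Q.card ∧
      (∀ x ∈ F, ∃ v ∈ Q, R.pos x ≤ R.pos v) ∧
      ∃ T, R.Adm Q.card T ∧
        ∀ x, R.dg T x = (if x ∈ F then 1 else 0) + (Q.filter (fun v => R.p v = x)).card := by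
  induction Q using Finset.induction_on_max_value R.pos with
  | empty =>
    intro _
    refine ⟨Pi.single ∅ 1, ?_, ?_, fun F hF => ?_⟩
    · funext H
      by_contra hne
      obtain ⟨j, _, hj⟩ := exists_of_bd_ne_zero hne
      exact hj (by simp)
    · intro h
      have := congrFun h ∅
      simp at this
    · obtain rfl : F = ∅ := by
        by_contra hne
        exact hF (by simp [hne])
      exact ⟨rfl, by simp, 0, ⟨rfl, by simp⟩, fun x => by simp [R.dg_zero]⟩
  | insert v Q hvQ hmax ih =>
    intro hQ
    obtain ⟨z, hcyc, hne, hz⟩ := ih fun w hw => hQ w (Finset.mem_insert_of_mem hw)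
    obtain ⟨hvr, hvu⟩ := hQ v (Finset.mem_insert_self v Q)
    have hvo : R.pos (R.o v) < R.pos v := R.pos_o hvr hvu
    have hov : R.o v ≠ v := fun h => by rw [h] at hvo; omega
    have hnot : ∀ F, z F ≠ 0 → v ∉ F := by
      intro F hF hvF
      obtain ⟨w, hw, hle⟩ := (hz F hF).2.1 v hvF
      have hle' := hmax w hw
      have : v = w := R.pos_inj (le_antisymm hle hle')
      exact hvQ (this ▸ hw)
    have hcount : ∀ x, ((insert v Q).filter (fun w => R.p w = x)).card =
        (Q.filter (fun w => R.p w = x)).card + if x = R.p v then 1 else 0 := by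
      intro x
      rw [Finset.filter_insert]
      by_cases hx : R.p v = x
      · rw [if_pos hx, if_pos hx.symm, Finset.card_insert_of_notMem (by simp [hvQ])]
      · rw [if_neg hx, if_neg (Ne.symm hx), add_zero]
    -- the properties of a set `insert j H` in the support, with `j` an end of the edge `{w, p w}`
    have hstep : ∀ (j w : Fin n) (F : Finset (Fin n)), w ≠ R.r → R.pos j ≤ R.pos v →
        (∀ x, R.dg (Pi.single w 1) x = (if x = j then 1 else 0) + (if x = R.p v then 1 else 0)) →
        wedge j z F ≠ 0 → F.card = (insert v Q).card ∧
        (∀ x ∈ F, ∃ v' ∈ insert v Q, R.pos x ≤ R.pos v') ∧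
        ∃ T, R.Adm (insert v Q).card T ∧ ∀ x, R.dg T x =
          (if x ∈ F then 1 else 0) + ((insert v Q).filter (fun v => R.p v = x)).card := by
      intro j w F hw hpj hdg hF
      obtain ⟨hjF, hne'⟩ := of_wedge_ne_zero hF
      obtain ⟨h1, h2, T, hT, hdT⟩ := hz _ hne'
      have hcF := Finset.card_erase_add_one hjF
      rw [Finset.card_insert_of_notMem hvQ]
      refine ⟨by omega, fun x hx => ?_, T + Pi.single w 1, hT.add (R.adm_single hw), fun x => ?_⟩
      · by_cases hxj : x = j
        · exact ⟨v, Finset.mem_insert_self v Q, hxj ▸ hpj⟩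
        · obtain ⟨v', hv', hle⟩ := h2 x (Finset.mem_erase.2 ⟨hxj, hx⟩)
          exact ⟨v', Finset.mem_insert_of_mem hv', hle⟩
      · rw [RootedTree.dg_add, hdT, hdg, hcount]
        by_cases hxj : x = j
        · subst hxj; simp [hjF]; omega
        · simp [hxj]; omega
    refine ⟨wedge v z - wedge (R.o v) z, ?_, ?_, fun F hF => ?_⟩
    · funext H
      rw [bd_sub, Pi.sub_apply, bd_wedge, bd_wedge, hcyc]
      simp [wedge]
    · obtain ⟨F, hF⟩ := Function.ne_iff.mp hne
      have hvF := hnot F hF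
      intro h
      have h1 := congrFun h (insert v F)
      have h2 : wedge (R.o v) z (insert v F) = 0 := by
        by_contra hcon
        refine hnot _ (of_wedge_ne_zero hcon).2 ?_
        simp [Ne.symm hov]
      rw [Pi.sub_apply, h2, sub_zero] at h1
      simp only [wedge, Finset.mem_insert_self, if_true, Finset.erase_insert hvF,
        Pi.zero_apply] at h1
      exact (mul_ne_zero (ksgn_ne_zero _ _) hF) h1
    · by_cases h : wedge v z F = 0
      · refine hstep (R.o v) (R.q v) F (R.q_ne v) hvo.le (R.dg_q v) fun h' => hF ?_
        simp [h, h']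
      · exact hstep v v F hvr le_rfl (R.dg_single v) h

/-- Lower bound for the projective dimension: the cycle of `exists_cycle` lives in a multidegree
which admits no larger faces. -/
lemma exists_nontrivial (hR : R.Presents G) (s : ℕ) :
    ∃ a, Nontrivial (Hmod (compIdeal K n G ^ s) a (min s (n - 2))) := by
  obtain ⟨Q, hQ, hcard⟩ : ∃ Q : Finset (Fin n), (∀ v ∈ Q, v ≠ R.r ∧ v ≠ R.u) ∧
      Q.card = min s (n - 2) := by
    have h1 : ((Finset.univ.erase R.r).erase R.u).card = n - 2 := by
      rw [Finset.card_erase_of_mem (by simp [R.u_ne]), Finset.card_erase_of_mem (by simp)]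
      simp; omega
    obtain ⟨Q, hQ, hc⟩ := Finset.exists_subset_card_eq (n := min s (n - 2))
      (by rw [h1]; exact min_le_right _ _)
    refine ⟨Q, fun v hv => ?_, hc⟩
    have := hQ hv
    simp at this
    exact ⟨this.2, this.1⟩
  obtain ⟨z, hcyc, hne, hz⟩ := exists_cycle (K := K) Q hQ
  have hQs : Q.card ≤ s := by omega
  set e : Fin n → ℕ := R.dg (Pi.single R.u 1) with he
  set k : Fin n → ℕ := fun x => (Q.filter (fun v => R.p v = x)).card with hk
  have hka : ∀ x, k x + (s - Q.card) * e x ≤ s := by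
    intro x
    have h1 : k x ≤ Q.card := Finset.card_filter_le _ _
    have h2 : (s - Q.card) * e x ≤ (s - Q.card) * 1 :=
      Nat.mul_le_mul_left _ (R.dg_single_le R.u_ne x)
    omega
  set a : Fin n →₀ ℕ := Finsupp.equivFunOnFinite.symm fun x => s - (k x + (s - Q.card) * e x)
    with ha
  have hax : ∀ x, a x + (k x + (s - Q.card) * e x) = s := by
    intro x
    have := hka x
    simp only [ha, Finsupp.equivFunOnFinite_symm_apply_apply]; omega
  have hsume : ∑ x, e x = 2 := (R.adm_single R.u_ne).sum_dg
  have hsumk : ∑ x, k x = Q.card :=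
    (Finset.card_eq_sum_card_fiberwise (f := R.p) (fun _ _ => Finset.mem_univ _)).symm
  rw [← hcard]
  refine ⟨a, nontrivial_Hmod z (fun F hF => ?_) hcyc hne fun F hF hcF => ?_⟩
  · obtain ⟨h1, _, T, hT, hdT⟩ := hz F hF
    refine ⟨(face_iff hR s a F).2 ⟨T + (s - Q.card) • Pi.single R.u 1, ?_, fun x => ?_⟩, h1⟩
    · refine ⟨by simp [hT.1, R.u_ne.symm], ?_⟩
      have h2 : ∑ v, (Pi.single R.u 1 : Fin n → ℕ) v = 1 := (R.adm_single R.u_ne).2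
      simp only [Pi.add_apply, Pi.smul_apply, smul_eq_mul, Finset.sum_add_distrib,
        ← Finset.mul_sum, h2, hT.2]
      omega
    · rw [R.dg_add, R.dg_nsmul, hdT]
      have := hax x
      simp only [hk, he] at this
      omega
  · obtain ⟨T, hT, hx⟩ := (face_iff hR s a F).1 hF
    have h1 : ∑ x, (s + if x ∈ F then 1 else 0) ≤ ∑ x, (a x + R.dg T x) :=
      Finset.sum_le_sum fun x _ => hx x
    have h2 : ∑ x, (a x + (k x + (s - Q.card) * e x)) = ∑ _x : Fin n, s :=
      Finset.sum_congr rfl fun x _ => hax x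
    rw [Finset.sum_add_distrib, Finset.sum_add_distrib, hT.sum_dg, ← Finset.card_filter] at h1
    rw [Finset.sum_add_distrib, Finset.sum_add_distrib, ← Finset.mul_sum, hsume, hsumk] at h2
    simp only [Finset.filter_univ_mem] at h1
    omega

end Ideals

/-! ### Rooting a tree -/

/-- Rooting at the vertex `0`: the parent of `v` is its neighbour closer to the root, and heights
are ordered by the distance to the root, ties being broken by the vertex label. -/
lemma exists_rootedTree {n : ℕ} (hn : 2 ≤ n) (G : SimpleGraph (Fin n)) (hG : G.IsTree) :
    ∃ R : RootedTree n, R.Presents G := by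
  classical
  let r : Fin n := ⟨0, by omega⟩
  have hex : ∀ v : Fin n, ∃ w, v ≠ r → G.Adj v w ∧ G.dist w r < G.dist v r := by
    intro v
    obtain ⟨P, hP⟩ := hG.connected.exists_walk_length_eq_dist v r
    cases P with
    | nil => exact ⟨r, fun h => absurd rfl h⟩
    | cons h P' =>
      rename_i w
      refine ⟨w, fun _ => ⟨h, ?_⟩⟩
      have := G.dist_le P'
      rw [SimpleGraph.Walk.length_cons] at hP
      omega
  choose p hp using hex
  -- a vertex has at most one neighbour closer to the root, since both give a path to the root
  have huniq : ∀ v w, v ≠ r → G.Adj v w → G.dist w r < G.dist v r → w = p v := by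
    intro v w hv hvw hd
    have hpath : ∀ w (hvw : G.Adj v w), G.dist w r < G.dist v r →
        ∃ P : G.Walk w r, (SimpleGraph.Walk.cons hvw P).IsPath := by
      intro w hvw hd
      obtain ⟨P, hP⟩ := hG.connected.exists_walk_length_eq_dist w r
      refine ⟨P, SimpleGraph.Walk.isPath_of_length_eq_dist _ (le_antisymm ?_ (G.dist_le _))⟩
      rw [SimpleGraph.Walk.length_cons]
      omega
    obtain ⟨P, hP⟩ := hpath w hvw hd
    obtain ⟨P', hP'⟩ := hpath (p v) (hp v hv).1 (hp v hv).2
    have := (hG.existsUnique_path v r).unique hP hP'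
    have h2 := congrArg SimpleGraph.Walk.snd this
    simpa using h2
  let pos : Fin n → ℕ := fun v => G.dist v r * n + v
  have hpos : ∀ v w, G.dist w r < G.dist v r → pos w < pos v := by
    intro v w h
    have h1 : (G.dist w r + 1) * n ≤ G.dist v r * n := Nat.mul_le_mul_right n h
    have := w.2
    simp only [pos]
    rw [add_mul] at h1
    omega
  have hinj : Function.Injective pos := by
    intro v w h
    rcases lt_trichotomy (G.dist v r) (G.dist w r) with h1 | h1 | h1
    · have := hpos _ _ h1; omega
    · simp only [pos, h1] at h; ext; omega
    · have := hpos _ _ h1; omega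
  obtain ⟨u, hu, hmin⟩ := Finset.exists_min_image (Finset.univ.erase r) pos
    ⟨⟨1, by omega⟩, by simp [r]⟩
  refine ⟨⟨r, u, p, pos, hinj, fun v hv => hpos _ _ (hp v hv).2, by simpa using hu,
    fun v hv => hmin v (by simpa using hv)⟩, fun i j => ⟨fun hij => ?_, ?_⟩⟩
  · have hne : ∀ v w, G.dist w r < G.dist v r → v ≠ r := by
      rintro v w h rfl
      simp at h
    rcases hG.dist_eq_dist_add_one_of_adj r hij with h | h
    · rw [G.dist_comm, G.dist_comm (u := r)] at h
      exact Or.inl ⟨hne i j (by omega), huniq i j (hne i j (by omega)) hij (by omega)⟩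
    · rw [G.dist_comm, G.dist_comm (u := r)] at h
      exact Or.inr ⟨hne j i (by omega), huniq j i (hne j i (by omega)) hij.symm (by omega)⟩
  · rintro (⟨h, rfl⟩ | ⟨h, rfl⟩)
    · exact (hp i h).1
    · exact (hp j h).1.symm

lemma pdim_compIdeal_pow {n : ℕ} (K : Type) [Field K] (G : SimpleGraph (Fin n)) (hG : G.IsTree)
    (s : ℕ) (hs : 1 ≤ s) : pdim (compIdeal K n G ^ s) = min s (n - 2) := by
  rcases Nat.lt_or_ge n 2 with hn | hn
  -- without edges the ideal is zero, and `sSup ∅ = 0 = n - 2`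
  · have hsub : Subsingleton (Fin n) := by
      rw [Fin.subsingleton_iff_le_one]; omega
    have h0 : compIdeal K n G = ⊥ := by
      rw [compIdeal, Ideal.span_eq_bot]
      rintro _ ⟨i, j, hij, _⟩
      exact absurd (Subsingleton.elim i j) hij.ne
    have h1 : compIdeal K n G ^ s = ⊥ := by
      rw [h0, ← Ideal.zero_eq_bot, zero_pow (by omega)]
    have hempty : {i | ∃ a, Nontrivial (Hmod (compIdeal K n G ^ s) a i)} = ∅ := by
      rw [Set.eq_empty_iff_forall_notMem]
      rintro i ⟨a, ha⟩
      have hKB : IsEmpty (KB (compIdeal K n G ^ s) a i) := by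
        refine ⟨fun F => ?_⟩
        have := h1.le F.2.2.2
        rw [Ideal.mem_bot, monomial_eq_zero] at this
        exact one_ne_zero this
      obtain ⟨⟨x, hx⟩, ⟨y, hy⟩, hxy⟩ := ha
      obtain ⟨x', _, rfl⟩ := hx
      obtain ⟨y', _, rfl⟩ := hy
      exact hxy (by simp [Subsingleton.elim x' y'])
    rw [pdim, hempty]
    simp; omega
  · obtain ⟨R, hR⟩ := exists_rootedTree hn G hG
    refine IsGreatest.csSup_eq ⟨exists_nontrivial hR s, ?_⟩
    rintro i ⟨a, ha⟩
    exact le_of_nontrivial hR s i a ha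

/-- For a tree `G` with `n` vertices,
`pd(I_c(G)^s) = s` for `s ∈ [n-2]` and `pd(I_c(G)^s) = n - 2` for
`s ≥ n - 2`. -/
theorem pdim_compIdeal_pow_tree
    (K : Type) [Field K] (n : ℕ) (G : SimpleGraph (Fin n)) (htree : G.IsTree) :
    (∀ s : ℕ, 1 ≤ s → s ≤ n - 2 → pdim (compIdeal K n G ^ s) = s) ∧
    (∀ s : ℕ, 1 ≤ s → n - 2 ≤ s → pdim (compIdeal K n G ^ s) = n - 2) := by
  refine ⟨fun s h1 h2 => ?_, fun s h1 h2 => ?_⟩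
  · rw [pdim_compIdeal_pow K G htree s h1, min_eq_left h2]
  · rw [pdim_compIdeal_pow K G htree s h1, min_eq_right h2]

end Paper
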